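/- arXiv:2405.04431 — 8 statements merged into one kernel-verified Lean document; each statement's English description precedes it below -/
import Mathlib

section
/- Let 0 ≤ α ≤ 1, 0 ≤ p_t ≤ 1, 0 ≤ β ≤ 1 and let V : ℕ × ℕ → ℝ have property (★). Then for all b ≥ 1 and all Δ⁺ ≥ Δ⁻ ≥ 1: DV(b,Δ⁺) ≤ DV(b,Δ⁻); that is, Δ ↦ DV(b,Δ) is nonincreasing on {1, 2, 3, …} for every b ≥ 1. -/
/-- One-step expected value of the idle action (`a = 0`) in the token-based AoII MDP:
`V⁰(b,Δ) = α·p_t·V(b+1,0) + α·(1−p_t)·V(b+1,Δ+1) + (1−α)·p_t·V(b,0) + (1−α)·(1−p_t)·V(b,Δ+1)`. -/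
def Vidle (α p_t : ℝ) (V : ℕ × ℕ → ℝ) (b Δ : ℕ) : ℝ :=
  α * p_t * V (b + 1, 0) + α * (1 - p_t) * V (b + 1, Δ + 1)
    + (1 - α) * p_t * V (b, 0) + (1 - α) * (1 - p_t) * V (b, Δ + 1)

/-- One-step expected value of the update action (`a = 1`) in the token-based AoII MDP:
`V¹(b,Δ) = α·β·V(b,0) + α·(1−β)·V(b,Δ+1) + (1−α)·β·V(b−1,0) + (1−α)·(1−β)·V(b−1,Δ+1)`. -/
def Vupd (α β : ℝ) (V : ℕ × ℕ → ℝ) (b Δ : ℕ) : ℝ :=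
  α * β * V (b, 0) + α * (1 - β) * V (b, Δ + 1)
    + (1 - α) * β * V (b - 1, 0) + (1 - α) * (1 - β) * V (b - 1, Δ + 1)

/-- `DV(b,Δ) = V¹(b,Δ) − V⁰(b,Δ)`. -/
def DV (α β p_t : ℝ) (V : ℕ × ℕ → ℝ) (b Δ : ℕ) : ℝ :=
  Vupd α β V b Δ - Vidle α p_t V b Δ

/-- Property (★): for all `b ≥ 1` and all `Δ⁺ ≥ Δ⁻ ≥ 2`,
`(1−β)·(V(b−1,Δ⁺) − V(b−1,Δ⁻)) − (1−p_t)·(V(b,Δ⁺) − V(b,Δ⁻)) ≤ 0`. -/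
def StarProp (β p_t : ℝ) (V : ℕ × ℕ → ℝ) : Prop :=
  ∀ b Δm Δp : ℕ, 1 ≤ b → 2 ≤ Δm → Δm ≤ Δp →
    (1 - β) * (V (b - 1, Δp) - V (b - 1, Δm)) - (1 - p_t) * (V (b, Δp) - V (b, Δm)) ≤ 0

/-!
Once a possible token arrival has been accounted for, the outcomes that reset the age contribute to
`DV(b,Δ)` a term that does not depend on `Δ`. Up to that term, `DV(b,Δ)` is the average, with
weights `α` and `1 - α`, of the values at age `Δ + 1` of the two functions that (★), at `b + 1` and
at `b`, says are nonincreasing.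
-/

/-- The age-dependent part of `DV`: the difference between updating and idling, over the outcomes
where the age moves on to `Δ` instead of being reset. Here `b` counts the tokens after a possible
arrival, of which updating spends one (`b - 1` is truncated at `b = 0`). -/
def noResetDiff (β p_t : ℝ) (V : ℕ × ℕ → ℝ) (b Δ : ℕ) : ℝ :=
  (1 - β) * V (b - 1, Δ) - (1 - p_t) * V (b, Δ)

theorem StarProp.antitoneOn_noResetDiff {β p_t : ℝ} {V : ℕ × ℕ → ℝ} (hstar : StarProp β p_t V)
    {b : ℕ} (hb : 1 ≤ b) : AntitoneOn (noResetDiff β p_t V b) (Set.Ici 2) := by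
  intro Δm hΔm Δp _ hle
  have hgap := hstar b Δm Δp hb hΔm hle
  unfold noResetDiff
  linarith

theorem DV_eq_reset_add_noResetDiff (α β p_t : ℝ) (V : ℕ × ℕ → ℝ) (b Δ : ℕ) :
    DV α β p_t V b Δ =
      α * (β * V (b, 0) - p_t * V (b + 1, 0)) + (1 - α) * (β * V (b - 1, 0) - p_t * V (b, 0)) +
        (α * noResetDiff β p_t V (b + 1) (Δ + 1) + (1 - α) * noResetDiff β p_t V b (Δ + 1)) := by
  simp only [DV, Vupd, Vidle, noResetDiff, Nat.add_sub_cancel]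
  ring

theorem antitoneOn_DV_of_antitoneOn_noResetDiff {α β p_t : ℝ} {V : ℕ × ℕ → ℝ} {b n : ℕ}
    (hα0 : 0 ≤ α) (hα1 : α ≤ 1)
    (harrival : AntitoneOn (noResetDiff β p_t V (b + 1)) (Set.Ici (n + 1)))
    (hnoarrival : AntitoneOn (noResetDiff β p_t V b) (Set.Ici (n + 1))) :
    AntitoneOn (DV α β p_t V b) (Set.Ici n) := by
  intro Δm hΔm Δp hΔp hle
  have hΔm_succ : Δm + 1 ∈ Set.Ici (n + 1) := Nat.succ_le_succ hΔm
  have hΔp_succ : Δp + 1 ∈ Set.Ici (n + 1) := Nat.succ_le_succ hΔp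
  have hle_succ : Δm + 1 ≤ Δp + 1 := Nat.succ_le_succ hle
  rw [DV_eq_reset_add_noResetDiff, DV_eq_reset_add_noResetDiff]
  gcongr
  · exact harrival hΔm_succ hΔp_succ hle_succ
  · exact hnoarrival hΔm_succ hΔp_succ hle_succ

theorem DV_antitone_general {α β p_t : ℝ} {V : ℕ × ℕ → ℝ} (hα0 : 0 ≤ α) (hα1 : α ≤ 1)
    (hstar : StarProp β p_t V) {b : ℕ} (hb : 1 ≤ b) :
    AntitoneOn (DV α β p_t V b) (Set.Ici 1) :=
  antitoneOn_DV_of_antitoneOn_noResetDiff hα0 hα1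
    (hstar.antitoneOn_noResetDiff b.succ_pos) (hstar.antitoneOn_noResetDiff hb)

/-- If `0 ≤ α ≤ 1`, `0 ≤ p_t ≤ 1`, `0 ≤ β ≤ 1` and `V` has property (★), then
`Δ ↦ DV(b,Δ)` is nonincreasing on `{1,2,3,…}` for every `b ≥ 1`. -/
theorem DV_antitone (α β p_t : ℝ) (V : ℕ × ℕ → ℝ)
    (hα0 : 0 ≤ α) (hα1 : α ≤ 1) (hpt0 : 0 ≤ p_t) (hpt1 : p_t ≤ 1)
    (hβ0 : 0 ≤ β) (hβ1 : β ≤ 1) (hstar : StarProp β p_t V) :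
    ∀ b Δm Δp : ℕ, 1 ≤ b → 1 ≤ Δm → Δm ≤ Δp →
      DV α β p_t V b Δp ≤ DV α β p_t V b Δm := by
  intro b Δm Δp hb hΔm hle
  exact DV_antitone_general hα0 hα1 hstar hb hΔm (hΔm.trans hle) hle
end

section
/- Let 0 ≤ α ≤ 1, 0 ≤ p_t ≤ 1, 0 ≤ β ≤ 1 and let V : ℕ × ℕ → ℝ have property (★). Then the idle-action value function V⁰ also satisfies the (★)-type inequality: for all b ≥ 1 and all Δ⁺ ≥ Δ⁻ ≥ 2, (1−β)·(V⁰(b−1,Δ⁺) − V⁰(b−1,Δ⁻)) − (1−p_t)·(V⁰(b,Δ⁺) − V⁰(b,Δ⁻)) ≤ 0, where V⁰(0,Δ) is defined by the same formula as V⁰(b,Δ) with b = 0. -/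
/-! For fixed `β` and `p_t`, the functions with property (★) form a convex cone which is stable
under translation and contains every function of the token count alone. The idle action
contributes `p_t` times a function of the token count (the age is reset to `0`), plus `1 - p_t`
times a convex combination of translates of `V`. -/

namespace StarProp

variable {β p_t : ℝ} {V W : ℕ × ℕ → ℝ}

theorem add (hV : StarProp β p_t V) (hW : StarProp β p_t W) : StarProp β p_t (V + W) := by
  intro b Δm Δp hb hm hmp
  have hVW := add_nonpos (hV b Δm Δp hb hm hmp) (hW b Δm Δp hb hm hmp)
  simp only [Pi.add_apply]
  linarith

theorem smul (hV : StarProp β p_t V) {c : ℝ} (hc : 0 ≤ c) : StarProp β p_t (c • V) := by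
  intro b Δm Δp hb hm hmp
  have hcV := mul_nonpos_of_nonneg_of_nonpos hc (hV b Δm Δp hb hm hmp)
  simp only [Pi.smul_apply, smul_eq_mul]
  linarith

theorem comp_add_right (hV : StarProp β p_t V) (t : ℕ × ℕ) :
    StarProp β p_t fun s ↦ V (s + t) := by
  obtain ⟨m, n⟩ := t
  intro b Δm Δp hb hm hmp
  simpa only [Prod.mk_add_mk, Nat.sub_add_comm hb] using
    hV (b + m) (Δm + n) (Δp + n) (by lia) (by lia) (by lia)

theorem comp_fst (β p_t : ℝ) (f : ℕ → ℝ) : StarProp β p_t (f ∘ Prod.fst) := by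
  intro b Δm Δp _ _ _
  simp

end StarProp

theorem uncurry_Vidle_eq (α p_t : ℝ) (V : ℕ × ℕ → ℝ) :
    Function.uncurry (Vidle α p_t V) =
      (fun b ↦ p_t * (α * V (b + 1, 0) + (1 - α) * V (b, 0))) ∘ Prod.fst
        + (1 - p_t) • (α • (fun s ↦ V (s + (1, 1))) + (1 - α) • fun s ↦ V (s + (0, 1))) := by
  ext ⟨b, Δ⟩
  simp only [Function.uncurry_apply_pair, Vidle, Pi.add_apply, Pi.smul_apply, smul_eq_mul,
    Function.comp_apply, Prod.mk_add_mk, add_zero]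
  ring

theorem Vidle_star_general {α β p_t : ℝ} {V : ℕ × ℕ → ℝ} (hα0 : 0 ≤ α) (hα1 : α ≤ 1)
    (hpt1 : p_t ≤ 1) (hstar : StarProp β p_t V) :
    StarProp β p_t (Function.uncurry (Vidle α p_t V)) := by
  have hArrival := (hstar.comp_add_right (1, 1)).smul hα0
  have hNoArrival := (hstar.comp_add_right (0, 1)).smul (sub_nonneg.2 hα1)
  rw [uncurry_Vidle_eq]
  exact (StarProp.comp_fst β p_t _).add
    ((hArrival.add hNoArrival).smul (sub_nonneg.2 hpt1))

/-- If `0 ≤ α ≤ 1`, `0 ≤ p_t ≤ 1`, `0 ≤ β ≤ 1` and `V` has property (★), then the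
idle-action value function `V⁰` also satisfies the (★)-type inequality: for all `b ≥ 1`
and all `Δ⁺ ≥ Δ⁻ ≥ 2`,
`(1−β)·(V⁰(b−1,Δ⁺) − V⁰(b−1,Δ⁻)) − (1−p_t)·(V⁰(b,Δ⁺) − V⁰(b,Δ⁻)) ≤ 0`. -/
theorem Vidle_star (α β p_t : ℝ) (V : ℕ × ℕ → ℝ)
    (hα0 : 0 ≤ α) (hα1 : α ≤ 1) (hpt0 : 0 ≤ p_t) (hpt1 : p_t ≤ 1)
    (hβ0 : 0 ≤ β) (hβ1 : β ≤ 1) (hstar : StarProp β p_t V) :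
    ∀ b Δm Δp : ℕ, 1 ≤ b → 2 ≤ Δm → Δm ≤ Δp →
      (1 - β) * (Vidle α p_t V (b - 1) Δp - Vidle α p_t V (b - 1) Δm)
        - (1 - p_t) * (Vidle α p_t V b Δp - Vidle α p_t V b Δm) ≤ 0 :=
  Vidle_star_general hα0 hα1 hpt1 hstar
end

section
/- Let 0 ≤ α ≤ 1, 0 ≤ p_t ≤ 1, 0 ≤ β ≤ 1 and let V : ℕ × ℕ → ℝ have property (★). Then the update-action value function V¹ also satisfies the (★)-type inequality: for all b ≥ 2 and all Δ⁺ ≥ Δ⁻ ≥ 2, (1−β)·(V¹(b−1,Δ⁺) − V¹(b−1,Δ⁻)) − (1−p_t)·(V¹(b,Δ⁺) − V¹(b,Δ⁻)) ≤ 0. -/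
/-!
In an age increment of `V¹` the terms with age reset to `0` cancel. What remains is `1 - β` times
the `α`-weighted average of the increments of `V` at `b` and `b - 1`, with both ages shifted by one.
The left-hand side of (★) is linear in `V`, so for `V¹` it is the same nonnegative combination of
its values for `V`.
-/

/-- The left-hand side of (★) at token count `b` between the ages `Δm` and `Δp`. As in `StarProp`,
`b - 1` is truncated, so only `b ≥ 1` is meaningful. -/
def starGap (β p_t : ℝ) (V : ℕ × ℕ → ℝ) (b Δm Δp : ℕ) : ℝ :=
  (1 - β) * (V (b - 1, Δp) - V (b - 1, Δm)) - (1 - p_t) * (V (b, Δp) - V (b, Δm))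

theorem Vupd_sub_Vupd (α β : ℝ) (V : ℕ × ℕ → ℝ) (b Δm Δp : ℕ) :
    Vupd α β V b Δp - Vupd α β V b Δm =
      (1 - β) * (α * (V (b, Δp + 1) - V (b, Δm + 1))
        + (1 - α) * (V (b - 1, Δp + 1) - V (b - 1, Δm + 1))) := by
  unfold Vupd
  ring

theorem starGap_Vupd (α β p_t : ℝ) (V : ℕ × ℕ → ℝ) (b Δm Δp : ℕ) :
    starGap β p_t (Function.uncurry (Vupd α β V)) b Δm Δp =
      (1 - β) * (α * starGap β p_t V b (Δm + 1) (Δp + 1)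
        + (1 - α) * starGap β p_t V (b - 1) (Δm + 1) (Δp + 1)) := by
  simp only [starGap, Function.uncurry_apply_pair, Vupd_sub_Vupd]
  ring

theorem Vupd_star_general (α β p_t : ℝ) (V : ℕ × ℕ → ℝ)
    (hα0 : 0 ≤ α) (hα1 : α ≤ 1) (hβ1 : β ≤ 1) (hstar : StarProp β p_t V) :
    ∀ b Δm Δp : ℕ, 2 ≤ b → 1 ≤ Δm → Δm ≤ Δp →
      (1 - β) * (Vupd α β V (b - 1) Δp - Vupd α β V (b - 1) Δm)
        - (1 - p_t) * (Vupd α β V b Δp - Vupd α β V b Δm) ≤ 0 := by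
  intro b Δm Δp hb hm hmp
  have gap_b : starGap β p_t V b (Δm + 1) (Δp + 1) ≤ 0 :=
    hstar b (Δm + 1) (Δp + 1) (by lia) (by lia) (by lia)
  have gap_pred : starGap β p_t V (b - 1) (Δm + 1) (Δp + 1) ≤ 0 :=
    hstar (b - 1) (Δm + 1) (Δp + 1) (by lia) (by lia) (by lia)
  change starGap β p_t (Function.uncurry (Vupd α β V)) b Δm Δp ≤ 0
  rw [starGap_Vupd]
  exact mul_nonpos_of_nonneg_of_nonpos (sub_nonneg.2 hβ1) <|
    add_nonpos (mul_nonpos_of_nonneg_of_nonpos hα0 gap_b)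
      (mul_nonpos_of_nonneg_of_nonpos (sub_nonneg.2 hα1) gap_pred)

/-- If `0 ≤ α ≤ 1`, `0 ≤ p_t ≤ 1`, `0 ≤ β ≤ 1` and `V` has property (★), then the
update-action value function `V¹` also satisfies the (★)-type inequality: for all `b ≥ 2`
and all `Δ⁺ ≥ Δ⁻ ≥ 2`,
`(1−β)·(V¹(b−1,Δ⁺) − V¹(b−1,Δ⁻)) − (1−p_t)·(V¹(b,Δ⁺) − V¹(b,Δ⁻)) ≤ 0`. -/
theorem Vupd_star (α β p_t : ℝ) (V : ℕ × ℕ → ℝ)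
    (hα0 : 0 ≤ α) (hα1 : α ≤ 1) (hpt0 : 0 ≤ p_t) (hpt1 : p_t ≤ 1)
    (hβ0 : 0 ≤ β) (hβ1 : β ≤ 1) (hstar : StarProp β p_t V) :
    ∀ b Δm Δp : ℕ, 2 ≤ b → 2 ≤ Δm → Δm ≤ Δp →
      (1 - β) * (Vupd α β V (b - 1) Δp - Vupd α β V (b - 1) Δm)
        - (1 - p_t) * (Vupd α β V b Δp - Vupd α β V b Δm) ≤ 0 := by
  intro b Δm Δp hb hm hmp
  exact Vupd_star_general α β p_t V hα0 hα1 hβ1 hstar b Δm Δp hb (by lia) hmp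
end

section
/- Let 0 ≤ α ≤ 1, 0 ≤ p_t ≤ 1, 0 ≤ β ≤ 1 and let V : ℕ × ℕ → ℝ have property (★). Then for all b ≥ 2 and all Δ⁺ ≥ Δ⁻ ≥ 2: (1−β)·( min{V⁰(b−1,Δ⁺), V¹(b−1,Δ⁺)} − min{V⁰(b−1,Δ⁻), V¹(b−1,Δ⁻)} ) − (1−p_t)·( min{V⁰(b,Δ⁺), V¹(b,Δ⁺)} − min{V⁰(b,Δ⁻), V¹(b,Δ⁻)} ) ≤ 0. -/
/-!
Write `M` for the mean of `V` over the random token arrival. Both actions are mixtures of values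
of `M`: `V⁰(b, Δ) = p_t M(b, 0) + (1 - p_t) M(b, Δ + 1)` and
`V¹(b + 1, Δ) = β M(b, 0) + (1 - β) M(b, Δ + 1)`. Hence `1 - β` times an age increment of `V⁰` at
`b` equals `1 - p_t` times the same increment of `V¹` at `b + 1`. Averaging preserves (★), and (★)
for `M` says that the age increments of `V¹` are at most those of `V⁰`. So an increment of
`min V⁰ V¹` is at most that of `V⁰` (used at `b - 1`) and at least that of `V¹` (used at `b`), and
the equality between these two concludes.
-/

section MinSub

variable {G : Type*} [AddCommGroup G] [LinearOrder G] [IsOrderedAddMonoid G]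

theorem min_sub_min_le_max (a b c d : G) : min a b - min c d ≤ max (a - c) (b - d) := by
  refine sub_le_comm.1 (le_min ?_ ?_)
  · exact sub_le_comm.1 ((sub_le_sub_right (min_le_left a b) c).trans (le_max_left _ _))
  · exact sub_le_comm.1 ((sub_le_sub_right (min_le_right a b) d).trans (le_max_right _ _))

theorem min_sub_le_min_sub_min (a b c d : G) : min (a - c) (b - d) ≤ min a b - min c d := by
  refine le_sub_iff_add_le.2 (le_min ?_ ?_)
  · exact le_sub_iff_add_le.1 ((min_le_left _ _).trans (sub_le_sub_left (min_le_left c d) a))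
  · exact le_sub_iff_add_le.1 ((min_le_right _ _).trans (sub_le_sub_left (min_le_right c d) b))

end MinSub

/-- The mean of `V` over the random token arrival: the token count goes up by one with
probability `α` and is unchanged otherwise. -/
def arrivalMean (α : ℝ) (V : ℕ × ℕ → ℝ) (s : ℕ × ℕ) : ℝ :=
  α * V (s.1 + 1, s.2) + (1 - α) * V s

section OneStep

variable (α β p_t : ℝ) (V : ℕ × ℕ → ℝ) (b Δ Δ' : ℕ)

theorem Vidle_eq_arrivalMean :
    Vidle α p_t V b Δ =
      p_t * arrivalMean α V (b, 0) + (1 - p_t) * arrivalMean α V (b, Δ + 1) := by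
  simp only [Vidle, arrivalMean]
  ring

theorem Vupd_succ_eq_arrivalMean :
    Vupd α β V (b + 1) Δ =
      β * arrivalMean α V (b, 0) + (1 - β) * arrivalMean α V (b, Δ + 1) := by
  simp only [Vupd, arrivalMean, Nat.add_sub_cancel]
  ring

theorem Vidle_sub_Vidle :
    Vidle α p_t V b Δ' - Vidle α p_t V b Δ =
      (1 - p_t) * (arrivalMean α V (b, Δ' + 1) - arrivalMean α V (b, Δ + 1)) := by
  rw [Vidle_eq_arrivalMean, Vidle_eq_arrivalMean]
  ring

theorem Vupd_succ_sub_Vupd_succ :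
    Vupd α β V (b + 1) Δ' - Vupd α β V (b + 1) Δ =
      (1 - β) * (arrivalMean α V (b, Δ' + 1) - arrivalMean α V (b, Δ + 1)) := by
  rw [Vupd_succ_eq_arrivalMean, Vupd_succ_eq_arrivalMean]
  ring

theorem one_sub_mul_Vidle_sub_Vidle :
    (1 - β) * (Vidle α p_t V b Δ' - Vidle α p_t V b Δ) =
      (1 - p_t) * (Vupd α β V (b + 1) Δ' - Vupd α β V (b + 1) Δ) := by
  rw [Vidle_sub_Vidle, Vupd_succ_sub_Vupd_succ, mul_left_comm]

end OneStep

namespace StarProp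

variable {α β p_t : ℝ} {V : ℕ × ℕ → ℝ}

protected theorem arrivalMean (hV : StarProp β p_t V) (hα0 : 0 ≤ α) (hα1 : α ≤ 1) :
    StarProp β p_t (arrivalMean α V) := by
  rintro (_ | b) Δm Δp hb hm hmp
  · contradiction
  have arrival := mul_nonpos_of_nonneg_of_nonpos hα0 (hV (b + 2) Δm Δp (by simp) hm hmp)
  have no_arrival :=
    mul_nonpos_of_nonneg_of_nonpos (sub_nonneg.2 hα1) (hV (b + 1) Δm Δp hb hm hmp)
  simp only [arrivalMean, Nat.add_sub_cancel, Nat.add_succ_sub_one] at arrival no_arrival ⊢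
  linarith

theorem Vupd_sub_Vupd_le_Vidle_sub_Vidle (hV : StarProp β p_t V) (hα0 : 0 ≤ α) (hα1 : α ≤ 1)
    {b Δm Δp : ℕ} (hb : 1 ≤ b) (hm : 1 ≤ Δm) (hmp : Δm ≤ Δp) :
    Vupd α β V b Δp - Vupd α β V b Δm ≤ Vidle α p_t V b Δp - Vidle α p_t V b Δm := by
  obtain ⟨c, rfl⟩ := Nat.exists_eq_add_of_le' hb
  rw [Vupd_succ_sub_Vupd_succ, Vidle_sub_Vidle]
  exact sub_nonpos.1 <| hV.arrivalMean hα0 hα1 (c + 1) (Δm + 1) (Δp + 1) hb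
    (Nat.succ_le_succ hm) (Nat.succ_le_succ hmp)

end StarProp

theorem min_star_general (α β p_t : ℝ) (V : ℕ × ℕ → ℝ)
    (hα0 : 0 ≤ α) (hα1 : α ≤ 1) (hpt1 : p_t ≤ 1) (hβ1 : β ≤ 1) (hstar : StarProp β p_t V) :
    ∀ b Δm Δp : ℕ, 2 ≤ b → 1 ≤ Δm → Δm ≤ Δp →
      (1 - β) * (min (Vidle α p_t V (b - 1) Δp) (Vupd α β V (b - 1) Δp)
                  - min (Vidle α p_t V (b - 1) Δm) (Vupd α β V (b - 1) Δm))
        - (1 - p_t) * (min (Vidle α p_t V b Δp) (Vupd α β V b Δp)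
                  - min (Vidle α p_t V b Δm) (Vupd α β V b Δm)) ≤ 0 := by
  intro b Δm Δp hb hm hmp
  obtain ⟨c, rfl⟩ := Nat.exists_eq_add_of_le' (one_le_two.trans hb)
  have increments_le {n : ℕ} (hn : 1 ≤ n) :=
    hstar.Vupd_sub_Vupd_le_Vidle_sub_Vidle hα0 hα1 hn hm hmp
  rw [Nat.add_sub_cancel, sub_nonpos]
  calc
    _ ≤ (1 - β) * (Vidle α p_t V c Δp - Vidle α p_t V c Δm) := by
      refine mul_le_mul_of_nonneg_left ?_ (sub_nonneg.2 hβ1)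
      exact (min_sub_min_le_max ..).trans_eq
        (max_eq_left (increments_le (Nat.le_of_succ_le_succ hb)))
    _ = (1 - p_t) * (Vupd α β V (c + 1) Δp - Vupd α β V (c + 1) Δm) :=
      one_sub_mul_Vidle_sub_Vidle ..
    _ ≤ _ := by
      refine mul_le_mul_of_nonneg_left ?_ (sub_nonneg.2 hpt1)
      exact (min_eq_right (increments_le (one_le_two.trans hb))).ge.trans
        (min_sub_le_min_sub_min ..)

/-- If `0 ≤ α ≤ 1`, `0 ≤ p_t ≤ 1`, `0 ≤ β ≤ 1` and `V` has property (★), then for all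
`b ≥ 2` and all `Δ⁺ ≥ Δ⁻ ≥ 2`:
`(1−β)·(min{V⁰(b−1,Δ⁺),V¹(b−1,Δ⁺)} − min{V⁰(b−1,Δ⁻),V¹(b−1,Δ⁻)})
  − (1−p_t)·(min{V⁰(b,Δ⁺),V¹(b,Δ⁺)} − min{V⁰(b,Δ⁻),V¹(b,Δ⁻)}) ≤ 0`. -/
theorem min_star (α β p_t : ℝ) (V : ℕ × ℕ → ℝ)
    (hα0 : 0 ≤ α) (hα1 : α ≤ 1) (hpt0 : 0 ≤ p_t) (hpt1 : p_t ≤ 1)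
    (hβ0 : 0 ≤ β) (hβ1 : β ≤ 1) (hstar : StarProp β p_t V) :
    ∀ b Δm Δp : ℕ, 2 ≤ b → 2 ≤ Δm → Δm ≤ Δp →
      (1 - β) * (min (Vidle α p_t V (b - 1) Δp) (Vupd α β V (b - 1) Δp)
                  - min (Vidle α p_t V (b - 1) Δm) (Vupd α β V (b - 1) Δm))
        - (1 - p_t) * (min (Vidle α p_t V b Δp) (Vupd α β V b Δp)
                  - min (Vidle α p_t V b Δm) (Vupd α β V b Δm)) ≤ 0 := fun b Δm Δp hb hm =>
  min_star_general α β p_t V hα0 hα1 hpt1 hβ1 hstar b Δm Δp hb (one_le_two.trans hm)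
end

section
/- Let b_max ≥ 1 and Δ_max ≥ 1 be integers and let α, p_R, p_t, β ∈ (0,1) be reals. Consider the finite Markov chain on the state space S = {0,…,b_max} × {0,…,Δ_max} with transition matrix Q defined as follows. In state (b,Δ), the action a is chosen uniformly from {0,1} if b ≥ 1 and is a = 0 if b = 0. Given a, the next state (b',Δ') has independent components: b' = min(b − a + 1, b_max) with probability α and b' = b − a with probability 1 − α; if Δ = 0 then Δ' = 0 with probability p_R and Δ' = 1 with probability 1 − p_R (for either action); if Δ ≥ 1 and a = 0 then Δ' = 0 with probability p_t and Δ' = min(Δ+1, Δ_max) with probability 1 − p_t; if Δ ≥ 1 and a = 1 then Δ' = 0 with probability β and Δ' = min(Δ+1, Δ_max) with probability 1 − β. Then the chain is irreducible: for every pair of states s, s' ∈ S there exists n ≥ 1 such that the (s,s') entry of Qⁿ is strictly positive. -/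
/-- Transition matrix of the token-based AoII Markov chain on
`{0,…,b_max} × {0,…,Δ_max}` induced by the stationary policy that randomizes uniformly
over the feasible actions (`a ∈ {0,1}` uniformly if `b ≥ 1`, `a = 0` if `b = 0`):
tokens arrive with probability `α` (token count capped at `b_max`), an update consumes a
token; if `Δ = 0` the next age is `0` w.p. `p_R` and `1` w.p. `1 − p_R`; if `Δ ≥ 1` the
next age is `0` w.p. `p_t` (idle) or `β` (update), and `min(Δ+1, Δ_max)` otherwise. -/
noncomputable def aoiiKernel (bmax Δmax : ℕ) (α p_R p_t β : ℝ) :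
    Matrix (Fin (bmax + 1) × Fin (Δmax + 1)) (Fin (bmax + 1) × Fin (Δmax + 1)) ℝ :=
  fun s s' =>
    let b : ℕ := s.1; let Δ : ℕ := s.2; let b' : ℕ := s'.1; let Δ' : ℕ := s'.2
    let Pb : ℕ → ℝ := fun a =>
      (if b' = min (b - a + 1) bmax then α else 0) + (if b' = b - a then 1 - α else 0)
    let PΔ : ℕ → ℝ := fun a =>
      if Δ = 0 then (if Δ' = 0 then p_R else 0) + (if Δ' = 1 then 1 - p_R else 0)
      else
        (if Δ' = 0 then (if a = 1 then β else p_t) else 0)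
          + (if Δ' = min (Δ + 1) Δmax then (if a = 1 then 1 - β else 1 - p_t) else 0)
    if b = 0 then Pb 0 * PΔ 0
    else (1 / 2) * (Pb 0 * PΔ 0) + (1 / 2) * (Pb 1 * PΔ 1)

/-!
From `(b, Δ)` reset the age by idling, walk the token count one unit at a time to its target while
the age stays `0`, and then let the age grow one unit at a time while the token count stays put.
Each of these moves has positive probability.
-/

open Relation Set

theorem isIrreducible_of_forall_transGen {n R : Type*} [Ring R] [LinearOrder R] {A : Matrix n n R}
    (hA : ∀ i j, 0 ≤ A i j) (h : ∀ i j, TransGen (fun k l ↦ 0 < A k l) i j) :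
    A.IsIrreducible := by
  refine ⟨hA, fun i j ↦ ?_⟩
  let := A.toQuiver
  induction h i j with
  | single hij => exact ⟨Quiver.Path.nil.cons ⟨hij⟩, Nat.succ_pos _⟩
  | tail _ hkl ih =>
    obtain ⟨p, -⟩ := ih
    exact ⟨p.cons ⟨hkl⟩, Nat.succ_pos _⟩

/-- The probability that the next token count is `b'` when `b` tokens are left after the action,
that is, the law of `b'` given `b - a`. -/
noncomputable def tokenProb (bmax : ℕ) (α : ℝ) (b b' : ℕ) : ℝ :=
  (if b' = min (b + 1) bmax then α else 0) + (if b' = b then 1 - α else 0)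

/-- The probability that the age moves from `Δ` to `Δ'` when a positive age is reset with
probability `p`; the action enters only through `p`, which is `p_t` when idle and `β` when
updating. -/
noncomputable def ageProb (Δmax : ℕ) (p_R p : ℝ) (Δ Δ' : ℕ) : ℝ :=
  if Δ = 0 then (if Δ' = 0 then p_R else 0) + (if Δ' = 1 then 1 - p_R else 0)
  else (if Δ' = 0 then p else 0) + (if Δ' = min (Δ + 1) Δmax then 1 - p else 0)

section Components

variable {bmax Δmax b b' Δ Δ' : ℕ} {α p_R p : ℝ}

theorem tokenProb_nonneg (hα : α ∈ Icc 0 1) : 0 ≤ tokenProb bmax α b b' := by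
  have := sub_nonneg.2 hα.2
  have := hα.1
  unfold tokenProb
  positivity

theorem tokenProb_self_pos (hα : α ∈ Ico 0 1) : 0 < tokenProb bmax α b b := by
  have := sub_pos.2 hα.2
  have := hα.1
  rw [tokenProb, if_pos rfl]
  positivity

theorem tokenProb_succ_pos (hα : 0 < α) (hb : b < bmax) : 0 < tokenProb bmax α b (b + 1) := by
  simpa [tokenProb, Nat.succ_le_of_lt hb] using hα

theorem ageProb_nonneg (hR : p_R ∈ Icc 0 1) (hp : p ∈ Icc 0 1) :
    0 ≤ ageProb Δmax p_R p Δ Δ' := by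
  have := sub_nonneg.2 hR.2
  have := sub_nonneg.2 hp.2
  have := hR.1
  have := hp.1
  unfold ageProb
  positivity

theorem ageProb_zero_zero_pos (hR : 0 < p_R) : 0 < ageProb Δmax p_R p 0 0 := by
  simpa [ageProb] using hR

theorem ageProb_reset_pos (hR : 0 < p_R) (hp : p ∈ Ioc 0 1) : 0 < ageProb Δmax p_R p Δ 0 := by
  rcases eq_or_ne Δ 0 with rfl | hΔ
  · exact ageProb_zero_zero_pos hR
  · have := sub_nonneg.2 hp.2
    have := hp.1
    rw [ageProb, if_neg hΔ, if_pos rfl]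
    positivity

theorem ageProb_succ_pos (hR : p_R < 1) (hp : p < 1) (hΔ : Δ < Δmax) :
    0 < ageProb Δmax p_R p Δ (Δ + 1) := by
  rcases eq_or_ne Δ 0 with rfl | hΔ0
  · simpa [ageProb] using hR
  · simpa [ageProb, hΔ0, Nat.succ_le_of_lt hΔ] using hp

end Components

section Kernel

variable {bmax Δmax : ℕ} {α p_R p_t β : ℝ}

theorem aoiiKernel_apply (s s' : Fin (bmax + 1) × Fin (Δmax + 1)) :
    aoiiKernel bmax Δmax α p_R p_t β s s' =
      if (s.1 : ℕ) = 0 then tokenProb bmax α s.1 s'.1 * ageProb Δmax p_R p_t s.2 s'.2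
      else 1 / 2 * (tokenProb bmax α s.1 s'.1 * ageProb Δmax p_R p_t s.2 s'.2) +
        1 / 2 * (tokenProb bmax α (s.1 - 1) s'.1 * ageProb Δmax p_R β s.2 s'.2) := by
  simp [aoiiKernel, tokenProb, ageProb]

theorem aoiiKernel_nonneg (hα : α ∈ Icc 0 1) (hR : p_R ∈ Icc 0 1) (ht : p_t ∈ Icc 0 1)
    (hβ : β ∈ Icc 0 1) (s s' : Fin (bmax + 1) × Fin (Δmax + 1)) :
    0 ≤ aoiiKernel bmax Δmax α p_R p_t β s s' := by
  have hidle := mul_nonneg (tokenProb_nonneg (bmax := bmax) (b := s.1) (b' := s'.1) hα)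
    (ageProb_nonneg (Δmax := Δmax) (Δ := s.2) (Δ' := s'.2) hR ht)
  have hupdate := mul_nonneg (tokenProb_nonneg (bmax := bmax) (b := s.1 - 1) (b' := s'.1) hα)
    (ageProb_nonneg (Δmax := Δmax) (Δ := s.2) (Δ' := s'.2) hR hβ)
  rw [aoiiKernel_apply]
  positivity

theorem aoiiKernel_pos_of_idle (hα : α ∈ Icc 0 1) (hR : p_R ∈ Icc 0 1) (hβ : β ∈ Icc 0 1)
    {s s' : Fin (bmax + 1) × Fin (Δmax + 1)} (htoken : 0 < tokenProb bmax α s.1 s'.1)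
    (hage : 0 < ageProb Δmax p_R p_t s.2 s'.2) :
    0 < aoiiKernel bmax Δmax α p_R p_t β s s' := by
  have hupdate := mul_nonneg (tokenProb_nonneg (bmax := bmax) (b := s.1 - 1) (b' := s'.1) hα)
    (ageProb_nonneg (Δmax := Δmax) (Δ := s.2) (Δ' := s'.2) hR hβ)
  rw [aoiiKernel_apply]
  positivity

theorem aoiiKernel_pos_of_update (hα : α ∈ Icc 0 1) (hR : p_R ∈ Icc 0 1) (ht : p_t ∈ Icc 0 1)
    {s s' : Fin (bmax + 1) × Fin (Δmax + 1)} (hb : (s.1 : ℕ) ≠ 0)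
    (htoken : 0 < tokenProb bmax α (s.1 - 1) s'.1) (hage : 0 < ageProb Δmax p_R β s.2 s'.2) :
    0 < aoiiKernel bmax Δmax α p_R p_t β s s' := by
  have hidle := mul_nonneg (tokenProb_nonneg (bmax := bmax) (b := s.1) (b' := s'.1) hα)
    (ageProb_nonneg (Δmax := Δmax) (Δ := s.2) (Δ' := s'.2) hR ht)
  rw [aoiiKernel_apply, if_neg hb]
  positivity

theorem aoiiKernel_reset_pos (hα : α ∈ Ico 0 1) (hR : p_R ∈ Ioc 0 1) (ht : p_t ∈ Ioc 0 1)
    (hβ : β ∈ Icc 0 1) (b : Fin (bmax + 1)) (Δ : Fin (Δmax + 1)) :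
    0 < aoiiKernel bmax Δmax α p_R p_t β (b, Δ) (b, 0) :=
  aoiiKernel_pos_of_idle (Ico_subset_Icc_self hα) (Ioc_subset_Icc_self hR) hβ
    (tokenProb_self_pos hα) (ageProb_reset_pos hR.1 ht)

theorem aoiiKernel_token_gain_pos (hα : α ∈ Ioc 0 1) (hR : p_R ∈ Ioc 0 1) (hβ : β ∈ Icc 0 1)
    {b b' : Fin (bmax + 1)} (hb : b ⋖ b') :
    0 < aoiiKernel bmax Δmax α p_R p_t β (b, 0) (b', 0) := by
  have hb' : (b : ℕ) + 1 = b' := Nat.covBy_iff_add_one_eq.1 (Fin.covBy_iff.1 hb)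
  refine aoiiKernel_pos_of_idle (Ioc_subset_Icc_self hα) (Ioc_subset_Icc_self hR) hβ ?_
    (ageProb_zero_zero_pos hR.1)
  rw [← hb']
  exact tokenProb_succ_pos hα.1 (by lia)

theorem aoiiKernel_token_loss_pos (hα : α ∈ Ico 0 1) (hR : p_R ∈ Ioc 0 1) (ht : p_t ∈ Icc 0 1)
    {b b' : Fin (bmax + 1)} (hb : b ⋖ b') :
    0 < aoiiKernel bmax Δmax α p_R p_t β (b', 0) (b, 0) := by
  have hb' : (b : ℕ) + 1 = b' := Nat.covBy_iff_add_one_eq.1 (Fin.covBy_iff.1 hb)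
  refine aoiiKernel_pos_of_update (Ico_subset_Icc_self hα) (Ioc_subset_Icc_self hR) ht
    (by lia) ?_ (ageProb_zero_zero_pos hR.1)
  rw [← hb', Nat.add_sub_cancel]
  exact tokenProb_self_pos hα

theorem aoiiKernel_ageing_pos (hα : α ∈ Ico 0 1) (hR : p_R ∈ Ico 0 1) (ht : p_t < 1)
    (hβ : β ∈ Icc 0 1) (b : Fin (bmax + 1)) {Δ Δ' : Fin (Δmax + 1)} (hΔ : Δ ⋖ Δ') :
    0 < aoiiKernel bmax Δmax α p_R p_t β (b, Δ) (b, Δ') := by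
  have hΔ' : (Δ : ℕ) + 1 = Δ' := Nat.covBy_iff_add_one_eq.1 (Fin.covBy_iff.1 hΔ)
  refine aoiiKernel_pos_of_idle (Ico_subset_Icc_self hα) (Ico_subset_Icc_self hR) hβ
    (tokenProb_self_pos hα) ?_
  rw [← hΔ']
  exact ageProb_succ_pos hR.2 ht (by lia)

end Kernel

theorem aoiiKernel_irreducible_general (bmax Δmax : ℕ) {α p_R p_t β : ℝ} (hα : α ∈ Ioo 0 1)
    (hR : p_R ∈ Ioo 0 1) (ht : p_t ∈ Ioo 0 1) (hβ : β ∈ Icc 0 1) :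
    (aoiiKernel bmax Δmax α p_R p_t β).IsIrreducible := by
  have hα' := Ioo_subset_Ico_self hα
  have hR' := Ioo_subset_Ioc_self hR
  refine isIrreducible_of_forall_transGen (aoiiKernel_nonneg (Ioo_subset_Icc_self hα)
    (Ioo_subset_Icc_self hR) (Ioo_subset_Icc_self ht) hβ) fun ⟨b, Δ⟩ ⟨b', Δ'⟩ ↦ ?_
  let r := fun s s' ↦ 0 < aoiiKernel bmax Δmax α p_R p_t β s s'
  have reset : r (b, Δ) (b, 0) := aoiiKernel_reset_pos hα' hR' (Ioo_subset_Ioc_self ht) hβ b Δ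
  have tokens : ReflTransGen r (b, 0) (b', 0) :=
    (reflTransGen_of_succ (fun c c' ↦ r (c, 0) (c', 0))
      (fun _ hc ↦ aoiiKernel_token_gain_pos (Ioo_subset_Ioc_self hα) hR' hβ
        (Order.covBy_succ_of_not_isMax hc.2.not_isMax))
      (fun _ hc ↦ aoiiKernel_token_loss_pos hα' hR' (Ioo_subset_Icc_self ht)
        (Order.covBy_succ_of_not_isMax hc.2.not_isMax))).lift (·, 0) fun _ _ h ↦ h
  have ageing : ReflTransGen r (b', 0) (b', Δ') :=
    (reflTransGen_of_succ_of_le (fun d d' ↦ r (b', d) (b', d'))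
      (fun _ hd ↦ aoiiKernel_ageing_pos hα' (Ioo_subset_Ico_self hR) ht.2 hβ b'
        (Order.covBy_succ_of_not_isMax hd.2.not_isMax))
      (Fin.zero_le Δ')).lift (b', ·) fun _ _ h ↦ h
  exact ((TransGen.single reset).trans_left tokens).trans_left ageing

/-- Proposition 1 of the paper: for `b_max ≥ 1`, `Δ_max ≥ 1` and
`α, p_R, p_t, β ∈ (0,1)`, the token-based AoII chain under the uniformly randomized
stationary policy is irreducible: every state `s'` is reachable from every state `s`,
i.e. some power of the transition matrix has a strictly positive `(s,s')` entry. -/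
theorem aoiiKernel_irreducible (bmax Δmax : ℕ) (hb : 1 ≤ bmax) (hΔ : 1 ≤ Δmax)
    (α p_R p_t β : ℝ)
    (hα : 0 < α) (hα1 : α < 1) (hpR : 0 < p_R) (hpR1 : p_R < 1)
    (hpt : 0 < p_t) (hpt1 : p_t < 1) (hβ : 0 < β) (hβ1 : β < 1) :
    ∀ s s' : Fin (bmax + 1) × Fin (Δmax + 1),
      ∃ n : ℕ, 1 ≤ n ∧ 0 < (aoiiKernel bmax Δmax α p_R p_t β ^ n) s s' := by
  have hirr := aoiiKernel_irreducible_general bmax Δmax ⟨hα, hα1⟩ ⟨hpR, hpR1⟩ ⟨hpt, hpt1⟩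
    ⟨hβ.le, hβ1.le⟩
  exact (Matrix.isIrreducible_iff_exists_pow_pos hirr.nonneg).1 hirr
end

section
/- Let b_max ≥ 1 and Δ_max ≥ 1 be integers and let α_min, α_max, q ∈ (0,1) be reals. Consider the finite Markov chain on the state space S = {0,…,b_max}² × {1,…,Δ_max} × {0,1} with transition matrix Q defined as follows. In state (b₀,b₁,Δ,r), the update action a = 1 is feasible iff (r = 0 and b₀ ≥ 1) or (r = 1 and b₁ ≥ 1), the idle action a = 0 is always feasible, and the action is chosen uniformly among the feasible actions. Given a, the next state (b₀',b₁',Δ',r') has: Δ' = 1 if a = 1 and Δ' = min(Δ+1, Δ_max) if a = 0; r' = 1 with probability q and r' = 0 with probability 1 − q, independently of everything else; if r = 0 then b₁' = b₁ and b₀' = min(b₀ − a + 1, b_max) with probability α_min, b₀' = b₀ − a with probability 1 − α_min; if r = 1 then b₀' = b₀ and b₁' = min(b₁ − a + 1, b_max) with probability α_max, b₁' = b₁ − a with probability 1 − α_max. Then the chain is irreducible: for every pair of states s, s' ∈ S there exists n ≥ 1 such that the (s,s') entry of Qⁿ is strictly positive. -/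
/-- Transition matrix of the token-based two-constraint AoI Markov chain on
`{0,…,b_max}² × {1,…,Δ_max} × {0,1}` induced by the stationary policy that randomizes
uniformly over the feasible actions: the update action `a = 1` is feasible iff
(`r = 0` and `b₀ ≥ 1`) or (`r = 1` and `b₁ ≥ 1`); an update resets the AoI to `1` while
idling increases it to `min(Δ+1, Δ_max)`; requests are i.i.d. Bernoulli(`q`); when
`r = 0` (resp. `r = 1`) a type-0 (resp. type-1) token arrives with probability
`α_min` (resp. `α_max`), counts capped at `b_max`, and an update consumes one token of
the type matching `r`. -/
noncomputable def aoiKernel2 (bmax Δmax : ℕ) (αmin αmax q : ℝ) :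
    Matrix (Fin (bmax + 1) × Fin (bmax + 1) × {Δ : ℕ // Δ ∈ Finset.Icc 1 Δmax} × Fin 2)
           (Fin (bmax + 1) × Fin (bmax + 1) × {Δ : ℕ // Δ ∈ Finset.Icc 1 Δmax} × Fin 2)
           ℝ :=
  fun s s' =>
    let b0 : ℕ := s.1; let b1 : ℕ := s.2.1; let Δ : ℕ := s.2.2.1.1; let r : ℕ := s.2.2.2
    let b0' : ℕ := s'.1; let b1' : ℕ := s'.2.1; let Δ' : ℕ := s'.2.2.1.1
    let r' : ℕ := s'.2.2.2
    let P : ℕ → ℝ := fun a =>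
      (if r = 0 then
          (if b0' = min (b0 - a + 1) bmax then αmin else 0)
            + (if b0' = b0 - a then 1 - αmin else 0)
        else if b0' = b0 then 1 else 0)
      * (if r = 1 then
          (if b1' = min (b1 - a + 1) bmax then αmax else 0)
            + (if b1' = b1 - a then 1 - αmax else 0)
        else if b1' = b1 then 1 else 0)
      * (if a = 1 then (if Δ' = 1 then (1 : ℝ) else 0)
         else if Δ' = min (Δ + 1) Δmax then 1 else 0)
      * (if r' = 1 then q else 1 - q)
    if (r = 0 ∧ 1 ≤ b0) ∨ (r = 1 ∧ 1 ≤ b1) then (1 / 2) * P 0 + (1 / 2) * P 1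
    else P 0

/-!
Call an entry of `aoiKernel2` a possible step when it is positive; as all entries are nonnegative,
it suffices to connect any two states by possible steps. Because the arrival probabilities lie
strictly between `0` and `1`, idling can keep or increment the count of the type currently
requested, and transmitting can keep or decrement it; because `0 < q < 1`, the next request is
arbitrary. Hence the counts can be steered to any values as long as the age is left uncontrolled.
Steer them to a state from which a transmission lands on the target counts with age `1`, then idle
without arrivals until the age has grown to its target.
-/

/-- The ages of information `{1,…,Δ_max}`. -/
abbrev AoIAge (Δmax : ℕ) : Type :=
  {Δ : ℕ // Δ ∈ Finset.Icc 1 Δmax}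

/-- The state space `{0,…,b_max}² × {1,…,Δ_max} × {0,1}` of the chain. -/
abbrev AoIState (bmax Δmax : ℕ) : Type :=
  Fin (bmax + 1) × Fin (bmax + 1) × AoIAge Δmax × Fin 2

/-- The state with token counts `b`, age `Δ` and request `r`. Indexing the counts by the request
type lets both types of tokens be treated at once: `b r` is the count usable under request `r`. -/
def aoiState {bmax Δmax : ℕ} (b : Fin 2 → Fin (bmax + 1)) (Δ : AoIAge Δmax)
    (r : Fin 2) : AoIState bmax Δmax :=
  (b 0, b 1, Δ, r)

theorem exists_eq_aoiState {bmax Δmax : ℕ} (s : AoIState bmax Δmax) :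
    ∃ b Δ r, s = aoiState b Δ r :=
  ⟨![s.1, s.2.1], s.2.2.1, s.2.2.2, rfl⟩

theorem exists_pow_apply_pos_of_transGen {n R : Type*} [Fintype n] [DecidableEq n]
    [Semiring R] [PartialOrder R] [IsStrictOrderedRing R] {A : Matrix n n R}
    (hA : ∀ i j, 0 ≤ A i j) {i j : n} (h : Relation.TransGen (fun i j => 0 < A i j) i j) :
    ∃ k : ℕ, 1 ≤ k ∧ 0 < (A ^ k) i j := by
  induction h with
  | single hij => exact ⟨1, le_rfl, by rwa [pow_one]⟩
  | @tail l j _ hlj ih =>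
    obtain ⟨k, -, hil⟩ := ih
    refine ⟨k + 1, k.succ_pos, ?_⟩
    rw [pow_succ, Matrix.mul_apply]
    exact Finset.sum_pos' (fun m _ => mul_nonneg (Matrix.pow_apply_nonneg hA k i m) (hA m j))
      ⟨l, Finset.mem_univ l, mul_pos hil hlj⟩

theorem val_eq_or_eq_add_one_of_wcovBy {n : ℕ} {x y : Fin n} (h : x ⩿ y) :
    (y : ℕ) = x ∨ (y : ℕ) = x + 1 := by
  rcases wcovBy_iff_eq_or_covBy.mp h with rfl | h
  · exact .inl rfl
  · exact .inr (Nat.covBy_iff_add_one_eq.mp (Fin.covBy_iff.mp h)).symm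

/-- The possible steps of the chain, described combinatorially. Idling keeps the count of the
requested type or increments it, transmitting keeps it (a token is spent and another arrives) or
decrements it; the next request `r'` is arbitrary. A token arriving at a full bucket is lost, which
is one more way of keeping the count, so the cap needs no case of its own. -/
inductive AoIStep {bmax Δmax : ℕ} : AoIState bmax Δmax → AoIState bmax Δmax → Prop
  | idle {b b' : Fin 2 → Fin (bmax + 1)} {Δ Δ' : AoIAge Δmax} {r r' : Fin 2}
      (hr : b r ⩿ b' r) (hne : ∀ i ≠ r, b' i = b i) (hΔ' : (Δ' : ℕ) = min ((Δ : ℕ) + 1) Δmax) :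
      AoIStep (aoiState b Δ r) (aoiState b' Δ' r')
  | transmit {b b' : Fin 2 → Fin (bmax + 1)} {Δ Δ' : AoIAge Δmax} {r r' : Fin 2}
      (hpos : 0 < b r) (hr : b' r ⩿ b r) (hne : ∀ i ≠ r, b' i = b i)
      (hΔ' : (Δ' : ℕ) = 1) :
      AoIStep (aoiState b Δ r) (aoiState b' Δ' r')

section Kernel

/-- The probability that a token count moves from `b` to `b'` when action `a` is taken; the count
changes only if `active` holds, i.e. if its type matches the current request. -/
noncomputable def aoiTokenProb (cap : ℕ) (α : ℝ) (active : Prop) [Decidable active]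
    (a b b' : ℕ) : ℝ :=
  if active then
    (if b' = min (b - a + 1) cap then α else 0) + (if b' = b - a then 1 - α else 0)
  else if b' = b then 1 else 0

theorem aoiTokenProb_nonneg {α : ℝ} (hα : 0 ≤ α) (hα' : α ≤ 1) (cap : ℕ) (active : Prop)
    [Decidable active] (a b b' : ℕ) : 0 ≤ aoiTokenProb cap α active a b b' := by
  unfold aoiTokenProb
  split_ifs <;> linarith

theorem aoiTokenProb_pos {α : ℝ} (hα : 0 < α) (hα' : α < 1) {cap : ℕ} {active : Prop}
    [Decidable active] {a b b' : ℕ}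
    (hactive : active → b' = min (b - a + 1) cap ∨ b' = b - a) (hinactive : ¬active → b' = b) :
    0 < aoiTokenProb cap α active a b b' := by
  unfold aoiTokenProb
  split_ifs <;> first | linarith | tauto

variable {bmax Δmax : ℕ} {αmin αmax q : ℝ}

/-- The transition probability from `s` to `s'` given the action `a`. -/
noncomputable def aoiActionProb (αmin αmax q : ℝ) (s s' : AoIState bmax Δmax) (a : ℕ) : ℝ :=
  aoiTokenProb bmax αmin ((s.2.2.2 : ℕ) = 0) a s.1 s'.1
    * aoiTokenProb bmax αmax ((s.2.2.2 : ℕ) = 1) a s.2.1 s'.2.1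
    * (if a = 1 then (if s'.2.2.1.1 = 1 then (1 : ℝ) else 0)
       else if s'.2.2.1.1 = min (s.2.2.1.1 + 1) Δmax then 1 else 0)
    * (if (s'.2.2.2 : ℕ) = 1 then q else 1 - q)

theorem aoiKernel2_apply (s s' : AoIState bmax Δmax) :
    aoiKernel2 bmax Δmax αmin αmax q s s' =
      if ((s.2.2.2 : ℕ) = 0 ∧ 1 ≤ (s.1 : ℕ)) ∨ ((s.2.2.2 : ℕ) = 1 ∧ 1 ≤ (s.2.1 : ℕ)) then
        1 / 2 * aoiActionProb αmin αmax q s s' 0 + 1 / 2 * aoiActionProb αmin αmax q s s' 1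
      else aoiActionProb αmin αmax q s s' 0 :=
  rfl

theorem aoiKernel2_aoiState (b : Fin 2 → Fin (bmax + 1)) (Δ : AoIAge Δmax)
    (r : Fin 2) (s' : AoIState bmax Δmax) :
    aoiKernel2 bmax Δmax αmin αmax q (aoiState b Δ r) s' =
      if 0 < b r then
        1 / 2 * aoiActionProb αmin αmax q (aoiState b Δ r) s' 0
          + 1 / 2 * aoiActionProb αmin αmax q (aoiState b Δ r) s' 1
      else aoiActionProb αmin αmax q (aoiState b Δ r) s' 0 := by
  rw [aoiKernel2_apply]
  congr 1
  fin_cases r <;> simp [aoiState, Fin.lt_def, Nat.one_le_iff_ne_zero, Nat.pos_iff_ne_zero]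

theorem aoiActionProb_nonneg (hmin : 0 ≤ αmin) (hmin1 : αmin ≤ 1) (hmax : 0 ≤ αmax)
    (hmax1 : αmax ≤ 1) (hq : 0 ≤ q) (hq1 : q ≤ 1) (s s' : AoIState bmax Δmax) (a : ℕ) :
    0 ≤ aoiActionProb αmin αmax q s s' a := by
  refine mul_nonneg (mul_nonneg (mul_nonneg ?_ ?_) ?_) ?_
  · exact aoiTokenProb_nonneg hmin hmin1 ..
  · exact aoiTokenProb_nonneg hmax hmax1 ..
  · split_ifs <;> norm_num
  · split_ifs <;> linarith

theorem aoiKernel2_nonneg (hmin : 0 ≤ αmin) (hmin1 : αmin ≤ 1) (hmax : 0 ≤ αmax)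
    (hmax1 : αmax ≤ 1) (hq : 0 ≤ q) (hq1 : q ≤ 1) (s s' : AoIState bmax Δmax) :
    0 ≤ aoiKernel2 bmax Δmax αmin αmax q s s' := by
  have hP := aoiActionProb_nonneg hmin hmin1 hmax hmax1 hq hq1 s s'
  rw [aoiKernel2_apply]
  split_ifs
  · linarith [hP 0, hP 1]
  · exact hP 0

theorem aoiActionProb_aoiState_pos (hmin : 0 < αmin) (hmin1 : αmin < 1) (hmax : 0 < αmax)
    (hmax1 : αmax < 1) (hq : 0 < q) (hq1 : q < 1) {b b' : Fin 2 → Fin (bmax + 1)}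
    {Δ Δ' : AoIAge Δmax} {r r' : Fin 2} {a : ℕ}
    (hr : (b' r : ℕ) = min (b r - a + 1) bmax ∨ (b' r : ℕ) = b r - a)
    (hne : ∀ i ≠ r, b' i = b i)
    (hΔ' : (Δ' : ℕ) = if a = 1 then 1 else min ((Δ : ℕ) + 1) Δmax) :
    0 < aoiActionProb αmin αmax q (aoiState b Δ r) (aoiState b' Δ' r') a := by
  have token_pos (i : Fin 2) {α : ℝ} (hα : 0 < α) (hα1 : α < 1) :
      0 < aoiTokenProb bmax α ((r : ℕ) = i) a (b i) (b' i) := by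
    refine aoiTokenProb_pos hα hα1 (fun hri => ?_) (fun hri => ?_)
    · rwa [← Fin.ext hri]
    · rw [hne i fun hir => hri (congrArg Fin.val hir.symm)]
  refine mul_pos (mul_pos (mul_pos (token_pos 0 hmin hmin1) (token_pos 1 hmax hmax1)) ?_) ?_
  · split_ifs at hΔ' ⊢ <;> simp_all [aoiState]
  · split_ifs <;> linarith

theorem AoIStep.aoiKernel2_pos (hmin : 0 < αmin) (hmin1 : αmin < 1) (hmax : 0 < αmax)
    (hmax1 : αmax < 1) (hq : 0 < q) (hq1 : q < 1) {s s' : AoIState bmax Δmax}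
    (h : AoIStep s s') : 0 < aoiKernel2 bmax Δmax αmin αmax q s s' := by
  have hP := aoiActionProb_nonneg hmin.le hmin1.le hmax.le hmax1.le hq.le hq1.le s s'
  cases h with
  | @idle b b' Δ Δ' r r' hr hne hΔ' =>
    have idle_pos : 0 < aoiActionProb αmin αmax q (aoiState b Δ r) (aoiState b' Δ' r') 0 := by
      refine aoiActionProb_aoiState_pos hmin hmin1 hmax hmax1 hq hq1 ?_ hne hΔ'
      have := val_eq_or_eq_add_one_of_wcovBy hr
      omega
    rw [aoiKernel2_aoiState]
    split_ifs
    · linarith [hP 1]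
    · exact idle_pos
  | @transmit b b' Δ Δ' r r' hpos hr hne hΔ' =>
    have transmit_pos :
        0 < aoiActionProb αmin αmax q (aoiState b Δ r) (aoiState b' Δ' r') 1 := by
      refine aoiActionProb_aoiState_pos hmin hmin1 hmax hmax1 hq hq1 ?_ hne hΔ'
      have := val_eq_or_eq_add_one_of_wcovBy hr
      have : 0 < (b r : ℕ) := hpos
      omega
    rw [aoiKernel2_aoiState, if_pos hpos]
    linarith [hP 0]

end Kernel

namespace AoIStep

open Relation

variable {bmax Δmax : ℕ}

theorem exists_idle {b b' : Fin 2 → Fin (bmax + 1)} {r : Fin 2} (hr : b r ⩿ b' r)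
    (hne : ∀ i ≠ r, b' i = b i) (Δ : AoIAge Δmax) (r' : Fin 2) :
    ∃ Δ', AoIStep (aoiState b Δ r) (aoiState b' Δ' r') := by
  have hΔ := Finset.mem_Icc.mp Δ.2
  exact ⟨⟨min (Δ + 1) Δmax, Finset.mem_Icc.mpr (by omega)⟩, idle hr hne rfl⟩

theorem exists_transmit {b b' : Fin 2 → Fin (bmax + 1)} {r : Fin 2} (hpos : 0 < b r)
    (hr : b' r ⩿ b r) (hne : ∀ i ≠ r, b' i = b i) (Δ : AoIAge Δmax) (r' : Fin 2) :
    ∃ Δ', AoIStep (aoiState b Δ r) (aoiState b' Δ' r') := by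
  have hΔ := Finset.mem_Icc.mp Δ.2
  exact ⟨⟨1, Finset.mem_Icc.mpr (by omega)⟩, transmit hpos hr hne rfl⟩

theorem exists_reflTransGen_update (b : Fin 2 → Fin (bmax + 1)) (Δ : AoIAge Δmax)
    (r : Fin 2) (v : Fin (bmax + 1)) :
    ∃ Δ', ReflTransGen AoIStep (aoiState b Δ r) (aoiState (Function.update b r v) Δ' r) := by
  rcases le_total (b r) v with hv | hv
  · induction le_iff_reflTransGen_covBy.mp hv with
    | refl => exact ⟨Δ, by rw [Function.update_eq_self]⟩
    | @tail w v hw hwv ih =>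
      obtain ⟨Δ₁, h₁⟩ := ih (le_iff_reflTransGen_covBy.mpr hw)
      obtain ⟨Δ₂, h₂⟩ := exists_idle (r := r) (b := Function.update b r w)
        (b' := Function.update b r v) (by simpa using hwv.wcovBy) (by simp +contextual) Δ₁ r
      exact ⟨Δ₂, h₁.tail h₂⟩
  · induction le_iff_reflTransGen_covBy.mp hv using ReflTransGen.head_induction_on with
    | refl => exact ⟨Δ, by rw [Function.update_eq_self]⟩
    | @head v w hvw hw ih =>
      obtain ⟨Δ₁, h₁⟩ := ih (le_iff_reflTransGen_covBy.mpr hw)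
      obtain ⟨Δ₂, h₂⟩ := exists_transmit (r := r) (b := Function.update b r w)
        (b' := Function.update b r v) (by simpa using (Fin.zero_le v).trans_lt hvw.lt)
        (by simpa using hvw.wcovBy) (by simp +contextual) Δ₁ r
      exact ⟨Δ₂, h₁.tail h₂⟩

theorem exists_transGen_aoiState (b b' : Fin 2 → Fin (bmax + 1)) (Δ : AoIAge Δmax)
    (r r' : Fin 2) :
    ∃ Δ', TransGen AoIStep (aoiState b Δ r) (aoiState b' Δ' r') := by
  have exists_switch (c : Fin 2 → Fin (bmax + 1)) (Δ : AoIAge Δmax) (r r' : Fin 2) :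
      ∃ Δ', AoIStep (aoiState c Δ r) (aoiState c Δ' r') :=
    exists_idle (WCovBy.refl _) (fun _ _ => rfl) Δ r'
  obtain ⟨Δ₁, h₁⟩ := exists_switch b Δ r 0
  obtain ⟨Δ₂, h₂⟩ := exists_reflTransGen_update b Δ₁ 0 (b' 0)
  obtain ⟨Δ₃, h₃⟩ := exists_switch (Function.update b 0 (b' 0)) Δ₂ 0 1
  obtain ⟨Δ₄, h₄⟩ := exists_reflTransGen_update (Function.update b 0 (b' 0)) Δ₃ 1 (b' 1)
  obtain ⟨Δ₅, h₅⟩ := exists_switch b' Δ₄ 1 r'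
  have h_update : Function.update (Function.update b 0 (b' 0)) 1 (b' 1) = b' := by
    ext i
    fin_cases i <;> simp
  rw [h_update] at h₄
  exact ⟨Δ₅, ((TransGen.head' h₁ h₂).tail h₃).trans_left h₄ |>.tail h₅⟩

theorem exists_forall_aoiState_of_age_eq_one (hb : 1 ≤ bmax) (b : Fin 2 → Fin (bmax + 1))
    (r r' : Fin 2) {Δ' : AoIAge Δmax} (hΔ' : (Δ' : ℕ) = 1) :
    ∃ c, ∀ Δ, AoIStep (aoiState c Δ r) (aoiState b Δ' r') := by
  obtain ⟨v, hv, hbv⟩ : ∃ v, 0 < v ∧ b r ⩿ v := by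
    rcases (Fin.zero_le (b r)).eq_or_lt with h0 | hpos
    · have hcov : (0 : Fin (bmax + 1)) ⋖ ⟨1, by omega⟩ := by simp
      exact ⟨_, hcov.lt, h0 ▸ hcov.wcovBy⟩
    · exact ⟨b r, hpos, WCovBy.refl _⟩
  exact ⟨Function.update b r v, fun Δ =>
    transmit (by simpa using hv) (by simpa using hbv) (by simp +contextual) hΔ'⟩

theorem reflTransGen_age (b : Fin 2 → Fin (bmax + 1)) (r : Fin 2) {Δ Δ' : AoIAge Δmax}
    (h : Δ ≤ Δ') :
    ReflTransGen AoIStep (aoiState b Δ r) (aoiState b Δ' r) := by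
  obtain ⟨m, hm⟩ := Δ'
  replace h : (Δ : ℕ) ≤ m := h
  induction m, h using Nat.le_induction with
  | base => exact .refl
  | succ m hΔm ih =>
    have hm' := Finset.mem_Icc.mp hm
    have hΔ := Finset.mem_Icc.mp Δ.2
    exact (ih (Finset.mem_Icc.mpr (by omega))).tail
      (idle (WCovBy.refl _) (fun _ _ => rfl) (min_eq_left hm'.2).symm)

theorem transGen (hb : 1 ≤ bmax) (s s' : AoIState bmax Δmax) : TransGen AoIStep s s' := by
  obtain ⟨b, Δ, r, rfl⟩ := exists_eq_aoiState s
  obtain ⟨b', Δ', r', rfl⟩ := exists_eq_aoiState s'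
  have hΔ' := Finset.mem_Icc.mp Δ'.2
  let one : AoIAge Δmax := ⟨1, Finset.mem_Icc.mpr (by omega)⟩
  obtain ⟨c, hc⟩ := exists_forall_aoiState_of_age_eq_one hb b' r r' (Δ' := one) rfl
  obtain ⟨Δ₁, h_tokens⟩ := exists_transGen_aoiState b c Δ r r
  exact (h_tokens.tail (hc Δ₁)).trans_left (reflTransGen_age b' r' hΔ'.1)

end AoIStep

/-- Proposition 3 of the paper: for `b_max ≥ 1`, `Δ_max ≥ 1` and
`α_min, α_max, q ∈ (0,1)`, the token-based two-constraint AoI chain under the uniformly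
randomized stationary policy is irreducible: every state `s'` is reachable from every
state `s`, i.e. some power of the transition matrix has a positive `(s,s')` entry. -/
theorem aoiKernel2_irreducible (bmax Δmax : ℕ) (hb : 1 ≤ bmax) (hΔ : 1 ≤ Δmax)
    (αmin αmax q : ℝ) (hmin : 0 < αmin) (hmin1 : αmin < 1)
    (hmax : 0 < αmax) (hmax1 : αmax < 1) (hq : 0 < q) (hq1 : q < 1) :
    ∀ s s' : Fin (bmax + 1) × Fin (bmax + 1) × {Δ : ℕ // Δ ∈ Finset.Icc 1 Δmax} × Fin 2,
      ∃ n : ℕ, 1 ≤ n ∧ 0 < (aoiKernel2 bmax Δmax αmin αmax q ^ n) s s' := by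
  intro s s'
  refine exists_pow_apply_pos_of_transGen
    (aoiKernel2_nonneg hmin.le hmin1.le hmax.le hmax1.le hq.le hq1.le) ?_
  exact Relation.TransGen.mono
    (fun _ _ => AoIStep.aoiKernel2_pos hmin hmin1 hmax hmax1 hq hq1) _ _ (AoIStep.transGen hb s s')
end

section
/- Let b_max ≥ 1 and Δ_max ≥ 1 be integers and let α_min, α_max, q ∈ [0,1] be reals. On the state space S = {0,…,b_max}² × {1,…,Δ_max} × {0,1}, define the value-iteration sequence V_0, V_1, V_2, … : S → ℝ by V_0 ≡ 0 and V_{k+1}(b₀,b₁,Δ,r) = Δ + min over feasible actions a of E[V_k(b₀',b₁',Δ',r')], where a = 1 is feasible iff (r = 0 and b₀ ≥ 1) or (r = 1 and b₁ ≥ 1), a = 0 is always feasible, and the next-state distribution given a is: Δ' = 1 if a = 1 and Δ' = min(Δ+1, Δ_max) if a = 0; r' = 1 with probability q and r' = 0 with probability 1 − q, independently; if r = 0 then b₁' = b₁ and b₀' = min(b₀ − a + 1, b_max) with probability α_min, b₀' = b₀ − a with probability 1 − α_min; if r = 1 then b₀' = b₀ and b₁' = min(b₁ − a + 1, b_max)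 with probability α_max, b₁' = b₁ − a with probability 1 − α_max. Then for every k ≥ 0 and every fixed (b₀,b₁,r), the map Δ ↦ V_k(b₀,b₁,Δ,r) is nondecreasing on {1,…,Δ_max}. -/
/-- Expected next-step value `E[V(b₀',b₁',Δ',r')]` of action `a ∈ {0,1}` in state
`(b₀,b₁,Δ,r)` of the token-based two-constraint AoI MDP: an update (`a = 1`) resets the
AoI to `1` while idling yields `min(Δ+1, Δ_max)`; the next request is Bernoulli(`q`);
if `r = 0` then `b₁' = b₁` and `b₀' = min(b₀ − a + 1, b_max)` w.p. `α_min`,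
`b₀' = b₀ − a` w.p. `1 − α_min`; symmetrically with `α_max` if `r = 1`. -/
noncomputable def expVal (bmax Δmax : ℕ) (αmin αmax q : ℝ)
    (V : ℕ → ℕ → ℕ → ℕ → ℝ) (a b0 b1 Δ r : ℕ) : ℝ :=
  let nΔ : ℕ := if a = 1 then 1 else min (Δ + 1) Δmax
  if r = 0 then
    αmin * (q * V (min (b0 - a + 1) bmax) b1 nΔ 1 + (1 - q) * V (min (b0 - a + 1) bmax) b1 nΔ 0)
      + (1 - αmin) * (q * V (b0 - a) b1 nΔ 1 + (1 - q) * V (b0 - a) b1 nΔ 0)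
  else
    αmax * (q * V b0 (min (b1 - a + 1) bmax) nΔ 1 + (1 - q) * V b0 (min (b1 - a + 1) bmax) nΔ 0)
      + (1 - αmax) * (q * V b0 (b1 - a) nΔ 1 + (1 - q) * V b0 (b1 - a) nΔ 0)

/-- The update action is feasible iff (`r = 0` and `b₀ ≥ 1`) or (`r = 1` and `b₁ ≥ 1`). -/
def updFeasible (b0 b1 r : ℕ) : Prop := (r = 0 ∧ 1 ≤ b0) ∨ (r = 1 ∧ 1 ≤ b1)

instance (b0 b1 r : ℕ) : Decidable (updFeasible b0 b1 r) := by
  unfold updFeasible; infer_instance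

/-- The value-iteration sequence of the token-based two-constraint AoI MDP:
`V_0 ≡ 0` and `V_{k+1}(b₀,b₁,Δ,r) = Δ + min over feasible actions a of
E[V_k(next state)]` (the idle action `a = 0` is always feasible). -/
noncomputable def vitTwo (bmax Δmax : ℕ) (αmin αmax q : ℝ) :
    ℕ → ℕ → ℕ → ℕ → ℕ → ℝ
  | 0 => fun _ _ _ _ => 0
  | (k + 1) => fun b0 b1 Δ r =>
      (Δ : ℝ) +
        (if updFeasible b0 b1 r then
          min (expVal bmax Δmax αmin αmax q (vitTwo bmax Δmax αmin αmax q k) 0 b0 b1 Δ r)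
              (expVal bmax Δmax αmin αmax q (vitTwo bmax Δmax αmin αmax q k) 1 b0 b1 Δ r)
         else expVal bmax Δmax αmin αmax q (vitTwo bmax Δmax αmin αmax q k) 0 b0 b1 Δ r)

/-! The next age is a nondecreasing function of the current age under either action: idling gives
`min (Δ + 1) Δmax`, updating the constant `1`. Token and request transitions, as well as feasibility
of an update, ignore the age. So an expected next-step value, being an iterated convex combination,
inherits monotonicity from `V`, and both the minimum over actions and the added cost `Δ` keep it. -/

theorem monotone_mul_add_one_sub_mul {ι R : Type*} [Preorder ι] [Ring R] [PartialOrder R]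
    [IsOrderedRing R] {p : R} (hp : p ∈ Set.Icc 0 1) {f g : ι → R}
    (hf : Monotone f) (hg : Monotone g) : Monotone fun x => p * f x + (1 - p) * g x :=
  (hf.const_mul hp.1).add (hg.const_mul (sub_nonneg.2 hp.2))

/-- The age `Δ'` following `Δ` under action `a`, where `1` means update and, as in `expVal`, every
other value means idle. -/
def nextAge (Δmax a Δ : ℕ) : ℕ := if a = 1 then 1 else min (Δ + 1) Δmax

theorem nextAge_monotone (Δmax a : ℕ) : Monotone (nextAge Δmax a) := by
  unfold nextAge
  split_ifs
  · exact monotone_const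
  · exact (monotone_id.add_const 1).min monotone_const

section TokenMDP

variable (bmax Δmax : ℕ) {αmin αmax q : ℝ}

theorem expVal_monotone_age
    (hmin : αmin ∈ Set.Icc 0 1) (hmax : αmax ∈ Set.Icc 0 1) (hq : q ∈ Set.Icc 0 1)
    {V : ℕ → ℕ → ℕ → ℕ → ℝ} (hV : ∀ b0 b1 r, Monotone fun Δ => V b0 b1 Δ r)
    (a b0 b1 r : ℕ) :
    Monotone fun Δ => expVal bmax Δmax αmin αmax q V a b0 b1 Δ r := by
  have hrequest (c0 c1 : ℕ) : Monotone fun Δ =>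
      q * V c0 c1 (nextAge Δmax a Δ) 1 + (1 - q) * V c0 c1 (nextAge Δmax a Δ) 0 :=
    (monotone_mul_add_one_sub_mul hq (hV c0 c1 1) (hV c0 c1 0)).comp (nextAge_monotone Δmax a)
  by_cases hr : r = 0
  · simp only [expVal, if_pos hr]
    exact monotone_mul_add_one_sub_mul hmin (hrequest _ b1) (hrequest _ b1)
  · simp only [expVal, if_neg hr]
    exact monotone_mul_add_one_sub_mul hmax (hrequest b0 _) (hrequest b0 _)

theorem vitTwo_monotone_age_general
    (hmin : αmin ∈ Set.Icc 0 1) (hmax : αmax ∈ Set.Icc 0 1) (hq : q ∈ Set.Icc 0 1)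
    (k b0 b1 r : ℕ) : Monotone fun Δ => vitTwo bmax Δmax αmin αmax q k b0 b1 Δ r := by
  induction k generalizing b0 b1 r with
  | zero => exact monotone_const
  | succ k ih =>
    have haction (a : ℕ) := expVal_monotone_age bmax Δmax hmin hmax hq ih a b0 b1 r
    refine Nat.mono_cast.add ?_
    split_ifs
    · exact (haction 0).min (haction 1)
    · exact haction 0

end TokenMDP

/-- For `b_max ≥ 1`, `Δ_max ≥ 1` and `α_min, α_max, q ∈ [0,1]`, every iterate `V_k` of
the two-constraint value iteration is nondecreasing in the age `Δ` on `{1,…,Δ_max}`,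
for every fixed `(b₀,b₁,r)` in the state space. -/
theorem vitTwo_monotone_age (bmax Δmax : ℕ) (hb : 1 ≤ bmax) (hΔ : 1 ≤ Δmax)
    (αmin αmax q : ℝ) (hmin0 : 0 ≤ αmin) (hmin1 : αmin ≤ 1)
    (hmax0 : 0 ≤ αmax) (hmax1 : αmax ≤ 1) (hq0 : 0 ≤ q) (hq1 : q ≤ 1) :
    ∀ k b0 b1 r : ℕ, b0 ≤ bmax → b1 ≤ bmax → r ≤ 1 →
      ∀ Δ1 Δ2 : ℕ, 1 ≤ Δ1 → Δ1 ≤ Δ2 → Δ2 ≤ Δmax →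
        vitTwo bmax Δmax αmin αmax q k b0 b1 Δ1 r
          ≤ vitTwo bmax Δmax αmin αmax q k b0 b1 Δ2 r := by
  intro k b0 b1 r _ _ _ Δ1 Δ2 _ hle _
  exact vitTwo_monotone_age_general bmax Δmax ⟨hmin0, hmin1⟩ ⟨hmax0, hmax1⟩ ⟨hq0, hq1⟩ k b0 b1 r hle
end

section
/- In the setting of the two-constraint value-iteration sequence V_k, for every k ≥ 0 and every state (b₀,b₁,Δ,r) at which the update action is feasible (i.e., r = 0 and b₀ ≥ 1, or r = 1 and b₁ ≥ 1), define V¹_{k+1}(b₀,b₁,Δ,r) = E[V_k(next state) | action a = 1] and V⁰_{k+1}(b₀,b₁,Δ,r) = E[V_k(next state) | action a = 0], and DV_{k+1} = V¹_{k+1} − V⁰_{k+1}. Then: (i) V¹_{k+1}(b₀,b₁,Δ,r) does not depend on Δ; (ii) Δ ↦ DV_{k+1}(b₀,b₁,Δ,r) is nonincreasing on {1,…,Δ_max}; and (iii) for every (b₀,b₁,r) the set {Δ ∈ {1,…,Δ_max} : DV_{k+1}(b₀,b₁,Δ,r) < 0} is upward closed in {1,…,Δ_max}, i.e., there exists a threshold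 Δ_T such that the value-iteration greedy policy transmits exactly when Δ ≥ Δ_T (the optimal policy of the token-based two-constraint MDP is a threshold policy in the age, Theorem 2 of the paper). -/
section AgeMonotonicity

theorem monotone_convexCombination {ι R : Type*} [Preorder ι] [Ring R] [PartialOrder R]
    [IsOrderedRing R] {t : R} (ht : t ∈ Set.Icc 0 1) {f g : ι → R}
    (hf : Monotone f) (hg : Monotone g) : Monotone fun x ↦ t * f x + (1 - t) * g x :=
  (hf.const_mul ht.1).add (hg.const_mul (sub_nonneg.2 ht.2))

/-- A value function `V b₀ b₁ Δ r` that is nondecreasing in the age `Δ`; this is the property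
carried through value iteration. It is required at all natural-number arguments, not only at
those in the state space. -/
def AgeMonotone (V : ℕ → ℕ → ℕ → ℕ → ℝ) : Prop :=
  ∀ b0 b1 r, Monotone fun Δ ↦ V b0 b1 Δ r

/-- The Bellman operator of the two-constraint MDP, whose iterates on `0` are `vitTwo`. -/
noncomputable def bellmanTwo (bmax Δmax : ℕ) (αmin αmax q : ℝ) (V : ℕ → ℕ → ℕ → ℕ → ℝ)
    (b0 b1 Δ r : ℕ) : ℝ :=
  (Δ : ℝ) +
    if updFeasible b0 b1 r then
      min (expVal bmax Δmax αmin αmax q V 0 b0 b1 Δ r) (expVal bmax Δmax αmin αmax q V 1 b0 b1 Δ r)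
    else expVal bmax Δmax αmin αmax q V 0 b0 b1 Δ r

/-- The advantage `DV = V¹ - V⁰` of updating over idling when the continuation value is `V`.
It is a cost difference, so updating is strictly preferred where it is negative. -/
noncomputable def updateAdvantage (bmax Δmax : ℕ) (αmin αmax q : ℝ) (V : ℕ → ℕ → ℕ → ℕ → ℝ)
    (b0 b1 Δ r : ℕ) : ℝ :=
  expVal bmax Δmax αmin αmax q V 1 b0 b1 Δ r - expVal bmax Δmax αmin αmax q V 0 b0 b1 Δ r

theorem vitTwo_succ (bmax Δmax : ℕ) (αmin αmax q : ℝ) (k : ℕ) :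
    vitTwo bmax Δmax αmin αmax q (k + 1) =
      bellmanTwo bmax Δmax αmin αmax q (vitTwo bmax Δmax αmin αmax q k) :=
  rfl

theorem expVal_one_eq_expVal_one (bmax Δmax : ℕ) (αmin αmax q : ℝ) (V : ℕ → ℕ → ℕ → ℕ → ℝ)
    (b0 b1 Δ1 Δ2 r : ℕ) :
    expVal bmax Δmax αmin αmax q V 1 b0 b1 Δ1 r = expVal bmax Δmax αmin αmax q V 1 b0 b1 Δ2 r := by
  simp only [expVal, if_true]

variable {αmin αmax q : ℝ} {V : ℕ → ℕ → ℕ → ℕ → ℝ}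

theorem AgeMonotone.monotone_expVal_zero (hV : AgeMonotone V) (hmin : αmin ∈ Set.Icc 0 1)
    (hmax : αmax ∈ Set.Icc 0 1) (hq : q ∈ Set.Icc 0 1) (bmax Δmax b0 b1 r : ℕ) :
    Monotone fun Δ ↦ expVal bmax Δmax αmin αmax q V 0 b0 b1 Δ r := by
  have next_age : Monotone fun Δ ↦ min (Δ + 1) Δmax :=
    (monotone_id.add_const 1).min monotone_const
  have request_mean (c0 c1 : ℕ) : Monotone fun Δ ↦
      q * V c0 c1 (min (Δ + 1) Δmax) 1 + (1 - q) * V c0 c1 (min (Δ + 1) Δmax) 0 :=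
    monotone_convexCombination hq ((hV c0 c1 1).comp next_age) ((hV c0 c1 0).comp next_age)
  simp only [expVal, zero_ne_one, if_false]
  split_ifs
  · exact monotone_convexCombination hmin (request_mean _ _) (request_mean _ _)
  · exact monotone_convexCombination hmax (request_mean _ _) (request_mean _ _)

theorem AgeMonotone.bellmanTwo (hV : AgeMonotone V) (hmin : αmin ∈ Set.Icc 0 1)
    (hmax : αmax ∈ Set.Icc 0 1) (hq : q ∈ Set.Icc 0 1) (bmax Δmax : ℕ) :
    AgeMonotone (bellmanTwo bmax Δmax αmin αmax q V) := by
  intro b0 b1 r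
  have idle := hV.monotone_expVal_zero hmin hmax hq bmax Δmax b0 b1 r
  have update : Monotone fun Δ ↦ expVal bmax Δmax αmin αmax q V 1 b0 b1 Δ r :=
    fun Δ1 Δ2 _ ↦ (expVal_one_eq_expVal_one bmax Δmax αmin αmax q V b0 b1 Δ1 Δ2 r).le
  refine Nat.mono_cast.add ?_
  split_ifs
  · exact idle.min update
  · exact idle

theorem AgeMonotone.antitone_updateAdvantage (hV : AgeMonotone V) (hmin : αmin ∈ Set.Icc 0 1)
    (hmax : αmax ∈ Set.Icc 0 1) (hq : q ∈ Set.Icc 0 1) (bmax Δmax b0 b1 r : ℕ) :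
    Antitone fun Δ ↦ updateAdvantage bmax Δmax αmin αmax q V b0 b1 Δ r :=
  fun Δ1 Δ2 h ↦ sub_le_sub (expVal_one_eq_expVal_one bmax Δmax αmin αmax q V b0 b1 Δ2 Δ1 r).le
    (hV.monotone_expVal_zero hmin hmax hq bmax Δmax b0 b1 r h)

theorem ageMonotone_vitTwo (hmin : αmin ∈ Set.Icc 0 1) (hmax : αmax ∈ Set.Icc 0 1)
    (hq : q ∈ Set.Icc 0 1) (bmax Δmax k : ℕ) : AgeMonotone (vitTwo bmax Δmax αmin αmax q k) := by
  induction k with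
  | zero => exact fun _ _ _ ↦ monotone_const
  | succ k ih =>
    rw [vitTwo_succ]
    exact ih.bellmanTwo hmin hmax hq bmax Δmax

end AgeMonotonicity

/-- Theorem 2 of the paper, via value iteration. With
`V¹_{k+1}(b₀,b₁,Δ,r) = E[V_k(next state) | a = 1]`,
`V⁰_{k+1}(b₀,b₁,Δ,r) = E[V_k(next state) | a = 0]` and
`DV_{k+1} = V¹_{k+1} − V⁰_{k+1}`, for every `k ≥ 0` and every state of
`{0,…,b_max}² × {1,…,Δ_max} × {0,1}` at which the update action is feasible:
(i) `V¹_{k+1}` does not depend on `Δ`; (ii) `Δ ↦ DV_{k+1}` is nonincreasing on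
`{1,…,Δ_max}`; (iii) `{Δ : DV_{k+1}(b₀,b₁,Δ,r) < 0}` is upward closed in
`{1,…,Δ_max}`, i.e. the greedy policy is a threshold policy in the age. -/
theorem vitTwo_threshold (bmax Δmax : ℕ) (hb : 1 ≤ bmax) (hΔ : 1 ≤ Δmax)
    (αmin αmax q : ℝ) (hmin0 : 0 ≤ αmin) (hmin1 : αmin ≤ 1)
    (hmax0 : 0 ≤ αmax) (hmax1 : αmax ≤ 1) (hq0 : 0 ≤ q) (hq1 : q ≤ 1) :
    (∀ k b0 b1 r : ℕ, b0 ≤ bmax → b1 ≤ bmax → r ≤ 1 → updFeasible b0 b1 r →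
      ∀ Δ1 Δ2 : ℕ, 1 ≤ Δ1 → Δ1 ≤ Δmax → 1 ≤ Δ2 → Δ2 ≤ Δmax →
        expVal bmax Δmax αmin αmax q (vitTwo bmax Δmax αmin αmax q k) 1 b0 b1 Δ1 r
          = expVal bmax Δmax αmin αmax q (vitTwo bmax Δmax αmin αmax q k) 1 b0 b1 Δ2 r)
    ∧ (∀ k b0 b1 r : ℕ, b0 ≤ bmax → b1 ≤ bmax → r ≤ 1 → updFeasible b0 b1 r →
      ∀ Δ1 Δ2 : ℕ, 1 ≤ Δ1 → Δ1 ≤ Δ2 → Δ2 ≤ Δmax →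
        expVal bmax Δmax αmin αmax q (vitTwo bmax Δmax αmin αmax q k) 1 b0 b1 Δ2 r
            - expVal bmax Δmax αmin αmax q (vitTwo bmax Δmax αmin αmax q k) 0 b0 b1 Δ2 r
          ≤ expVal bmax Δmax αmin αmax q (vitTwo bmax Δmax αmin αmax q k) 1 b0 b1 Δ1 r
            - expVal bmax Δmax αmin αmax q (vitTwo bmax Δmax αmin αmax q k) 0 b0 b1 Δ1 r)
    ∧ (∀ k b0 b1 r : ℕ, b0 ≤ bmax → b1 ≤ bmax → r ≤ 1 → updFeasible b0 b1 r →
      ∀ Δ1 Δ2 : ℕ, 1 ≤ Δ1 → Δ1 ≤ Δ2 → Δ2 ≤ Δmax →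
        expVal bmax Δmax αmin αmax q (vitTwo bmax Δmax αmin αmax q k) 1 b0 b1 Δ1 r
            - expVal bmax Δmax αmin αmax q (vitTwo bmax Δmax αmin αmax q k) 0 b0 b1 Δ1 r < 0 →
        expVal bmax Δmax αmin αmax q (vitTwo bmax Δmax αmin αmax q k) 1 b0 b1 Δ2 r
            - expVal bmax Δmax αmin αmax q (vitTwo bmax Δmax αmin αmax q k) 0 b0 b1 Δ2 r < 0) := by
  have advantage_antitone (k b0 b1 r : ℕ) : Antitone fun Δ ↦
      updateAdvantage bmax Δmax αmin αmax q (vitTwo bmax Δmax αmin αmax q k) b0 b1 Δ r :=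
    (ageMonotone_vitTwo ⟨hmin0, hmin1⟩ ⟨hmax0, hmax1⟩ ⟨hq0, hq1⟩ bmax Δmax k)
      |>.antitone_updateAdvantage ⟨hmin0, hmin1⟩ ⟨hmax0, hmax1⟩ ⟨hq0, hq1⟩ bmax Δmax b0 b1 r
  refine ⟨?_, ?_, ?_⟩
  · intro k b0 b1 r _ _ _ _ Δ1 Δ2 _ _ _ _
    exact expVal_one_eq_expVal_one bmax Δmax αmin αmax q _ b0 b1 Δ1 Δ2 r
  · intro k b0 b1 r _ _ _ _ Δ1 Δ2 _ hle _
    exact advantage_antitone k b0 b1 r hle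
  · intro k b0 b1 r _ _ _ _ Δ1 Δ2 _ hle _ hneg
    exact (advantage_antitone k b0 b1 r hle).trans_lt hneg
end
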